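/- arXiv:1206.0642 — 2 statements merged into one kernel-verified Lean document; each statement's English description precedes it below -/
import Mathlib

section
/- Let n ≥ 2, let F₀ : Bⁿ → ℂⁿ be locally biholomorphic with F₀(0) = 0 and DF₀(0) = Id, let σ be a biholomorphic automorphism of Bⁿ with σ(0) = ζ, and let G be the Koebe transform of F₀ by σ. Then the gradient of the Jacobian determinant of G at the origin satisfies ∇(JG)(0) = (∇(JF₀)(ζ)/JF₀(ζ))·Dσ(0) + ∇(Jσ)(0)/Jσ(0), where the gradients are row vectors and the first summand is the row vector ∇(JF₀)(ζ)/JF₀(ζ) multiplied on the right by the matrix Dσ(0). -/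
open scoped BigOperators

noncomputable section

/-- Partial derivative `∂f/∂z_i` of a scalar-valued holomorphic function on `ℂⁿ`. -/
def pd (n : ℕ) (i : Fin n) (f : (Fin n → ℂ) → ℂ) (z : Fin n → ℂ) : ℂ :=
  fderiv ℂ f z (Pi.single i 1)

/-- Second partial derivative `∂²f/∂z_i∂z_j`. -/
def pd2 (n : ℕ) (i j : Fin n) (f : (Fin n → ℂ) → ℂ) (z : Fin n → ℂ) : ℂ :=
  pd n i (fun w => pd n j f w) z

/-- Complex Jacobian matrix `DF`. -/
def Jac (n : ℕ) (F : (Fin n → ℂ) → (Fin n → ℂ)) (z : Fin n → ℂ) :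
    Matrix (Fin n) (Fin n) ℂ :=
  Matrix.of fun i j => pd n j (fun w => F w i) z

/-- Jacobian determinant `JF = det DF`. -/
def JDet (n : ℕ) (F : (Fin n → ℂ) → (Fin n → ℂ)) (z : Fin n → ℂ) : ℂ :=
  (Jac n F z).det

/-- Oda's Schwarzian derivative `S^k_{ij}F`; the derivative of `log JF` is expressed
by the logarithmic derivative `(∂JF/∂z)/JF`, which is the derivative of any local
branch of the logarithm. -/
def oSchw (n : ℕ) (F : (Fin n → ℂ) → (Fin n → ℂ)) (i j k : Fin n) (z : Fin n → ℂ) : ℂ :=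
  (∑ l, pd2 n i j (fun w => F w l) z * (Jac n F z)⁻¹ k l)
    - (1 / ((n : ℂ) + 1)) *
        ((if k = i then 1 else 0) * (pd n j (JDet n F) z / JDet n F z)
          + (if k = j then 1 else 0) * (pd n i (JDet n F) z / JDet n F z))

/-- `S⁰_{ij}F`, defined through a local branch `u₀` of `(JF)^{-1/(n+1)}`. -/
def oS0 (n : ℕ) (F : (Fin n → ℂ) → (Fin n → ℂ)) (u₀ : (Fin n → ℂ) → ℂ)
    (i j : Fin n) (z : Fin n → ℂ) : ℂ :=
  (u₀ z)⁻¹ * (pd2 n i j u₀ z - ∑ k, oSchw n F i j k z * pd n k u₀ z)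

/-- Euclidean norm on `ℂⁿ`. -/
def euclNorm (n : ℕ) (v : Fin n → ℂ) : ℝ := Real.sqrt (∑ i, ‖v i‖ ^ 2)

/-- Euclidean open unit ball `Bⁿ ⊆ ℂⁿ`. -/
def eball (n : ℕ) : Set (Fin n → ℂ) := {z | euclNorm n z < 1}

/-- A biholomorphic automorphism of the unit ball: a holomorphic bijection of `Bⁿ`
onto itself with holomorphic inverse. -/
def IsAutB (n : ℕ) (σ : (Fin n → ℂ) → (Fin n → ℂ)) : Prop :=
  DifferentiableOn ℂ σ (eball n) ∧ Set.BijOn σ (eball n) (eball n) ∧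
    ∃ τ : (Fin n → ℂ) → (Fin n → ℂ), DifferentiableOn ℂ τ (eball n) ∧
      (∀ z ∈ eball n, τ (σ z) = z) ∧ (∀ w ∈ eball n, σ (τ w) = w)

/-- The automorphism of `Bⁿ` with `σ(0) = (ζ₁,0,…,0)` used in Lemma 3.2. -/
def sigmaA (n : ℕ) [NeZero n] (ζ : ℂ) (z : Fin n → ℂ) : Fin n → ℂ := fun i =>
  if i = 0 then (z 0 + ζ) / (1 + (starRingEnd ℂ) ζ * z 0)
  else ((Real.sqrt (1 - ‖ζ‖ ^ 2) : ℂ) * z i) / (1 + (starRingEnd ℂ) ζ * z 0)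

/-- The Koebe transform `G(z) = Dσ(0)⁻¹ DF₀(σ(0))⁻¹ (F₀(σ(z)) − F₀(σ(0)))`. -/
def Koebe (n : ℕ) (F₀ σ : (Fin n → ℂ) → (Fin n → ℂ)) (z : Fin n → ℂ) : Fin n → ℂ :=
  Matrix.mulVec ((Jac n σ 0)⁻¹ * (Jac n F₀ (σ 0))⁻¹) (F₀ (σ z) - F₀ (σ 0))

/-- The conjugation `G(z) = U⁻¹·F₀(U·z)` of `F₀` by a unitary matrix `U`. -/
def unitKoebe (n : ℕ) (F₀ : (Fin n → ℂ) → (Fin n → ℂ)) (U : Matrix (Fin n) (Fin n) ℂ)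
    (z : Fin n → ℂ) : Fin n → ℂ :=
  Matrix.mulVec U⁻¹ (F₀ (Matrix.mulVec U z))

/-- The Schwarzian derivative operator `SF(z)(v) = (vᵗ𝕊¹F(z)v, …, vᵗ𝕊ⁿF(z)v)`. -/
def SchwOp (n : ℕ) (F : (Fin n → ℂ) → (Fin n → ℂ)) (z v : Fin n → ℂ) : Fin n → ℂ :=
  fun k => ∑ i, ∑ j, v i * oSchw n F i j k z * v j

/-- The squared Bergman norm `‖v‖_z² = Σ_{i,j} g_{ij}(z) v_i conj(v_j)` on `Bⁿ`. -/
def bergSq (n : ℕ) (z v : Fin n → ℂ) : ℝ :=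
  (∑ i, ∑ j, (((n : ℂ) + 1) / (((1 - (euclNorm n z) ^ 2 : ℝ) : ℂ)) ^ 2) *
      ((if i = j then ((1 - (euclNorm n z) ^ 2 : ℝ) : ℂ) else 0)
        + (starRingEnd ℂ) (z i) * z j) * v i * (starRingEnd ℂ) (v j)).re

/-- Membership in the linearly invariant family `F_α`. -/
def memF (n : ℕ) (α : ℝ) (F : (Fin n → ℂ) → (Fin n → ℂ)) : Prop :=
  DifferentiableOn ℂ F (eball n) ∧ (∀ z ∈ eball n, JDet n F z ≠ 0) ∧
    F 0 = 0 ∧ Jac n F 0 = 1 ∧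
    ∀ z ∈ eball n, ∀ v : Fin n → ℂ, bergSq n z v = 1 →
      Real.sqrt (bergSq n z (SchwOp n F z v)) ≤ α

/-!
By the chain rule `JG = (JF₀ ∘ σ) · Jσ / (JF₀(ζ) Jσ(0))` near the origin, so `∇(JG)(0)` is the
logarithmic gradient of `(JF₀ ∘ σ) · Jσ` at `0`, and the product and chain rules give the formula.

The analytic input is that the first derivatives of a holomorphic map of several variables are
again differentiable. The Cauchy estimate, in the form `‖f' x‖ ≤ 2 sup ‖f‖ / r`, shows successively
that `f` is locally Lipschitz, that `f'` is locally Lipschitz, that difference quotients in a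
direction `v` therefore converge locally uniformly to `f' v`, and that a locally uniform limit of
holomorphic maps is holomorphic.
-/

open Filter Topology

theorem norm_sub_sub_fderiv_le_of_lipschitzOnWith {𝕜 E F : Type*} [RCLike 𝕜]
    [NormedAddCommGroup E] [NormedSpace 𝕜 E] [NormedSpace ℝ E]
    [NormedAddCommGroup F] [NormedSpace 𝕜 F] {f : E → F} {K : NNReal} {s : Set E}
    (hs : Convex ℝ s) (hf : ∀ z ∈ s, DifferentiableAt 𝕜 f z)
    (hLip : LipschitzOnWith K (fderiv 𝕜 f) s) {y z : E} (hy : y ∈ s) (hz : z ∈ s) :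
    ‖f y - f z - fderiv 𝕜 f z (y - z)‖ ≤ K * ‖y - z‖ ^ 2 := by
  have hseg : segment ℝ z y ⊆ s := hs.segment_subset hz hy
  have hderiv : ∀ w ∈ segment ℝ z y, ‖fderiv 𝕜 f w - fderiv 𝕜 f z‖ ≤ K * ‖y - z‖ :=
    fun w hw ↦ (hLip.norm_sub_le (hseg hw) hz).trans <| by
      gcongr
      exact norm_sub_le_of_mem_segment hw
  have hmean := (convex_segment z y).norm_image_sub_le_of_norm_fderiv_le'
    (fun w hw ↦ hf w (hseg hw)) hderiv (left_mem_segment ℝ z y) (right_mem_segment ℝ z y)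
  exact hmean.trans_eq (by ring)

theorem exists_eventually_forall_add_smul_mem {𝕜 E : Type*} [TopologicalSpace 𝕜] [Semiring 𝕜]
    [TopologicalSpace E] [AddCommMonoid E] [Module 𝕜 E] [ContinuousAdd E] [ContinuousSMul 𝕜 E]
    {x : E} {t : Set E} (ht : t ∈ 𝓝 x) (v : E) :
    ∃ s ∈ 𝓝 x, ∀ᶠ h in 𝓝 (0 : 𝕜), ∀ z ∈ s, z + h • v ∈ t := by
  have hcont : Tendsto (fun p : 𝕜 × E ↦ p.2 + p.1 • v) (𝓝 0 ×ˢ 𝓝 x) (𝓝 x) := by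
    rw [← nhds_prod_eq]
    exact (by fun_prop : Continuous fun p : 𝕜 × E ↦ p.2 + p.1 • v).tendsto' _ _ (by simp)
  obtain ⟨H, hH, s, hs, hHs⟩ := mem_prod_iff.1 (hcont ht)
  exact ⟨s, hs, mem_of_superset hH fun h hh z hz ↦ hHs (Set.mk_mem_prod hh hz)⟩

section Holomorphic

open Metric

variable {E F : Type*} [NormedAddCommGroup E] [NormedSpace ℂ E]
  [NormedAddCommGroup F] [NormedSpace ℂ F] {f : E → F} {x : E}

theorem norm_fderiv_le_two_mul_div_of_norm_le {r C : ℝ} (hr : 0 < r)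
    (hf : DifferentiableOn ℂ f (ball x r)) (hC : ∀ z ∈ ball x r, ‖f z‖ ≤ C) :
    ‖fderiv ℂ f x‖ ≤ 2 * C / r := by
  refine Complex.norm_fderiv_le_div_of_mapsTo_ball hf (fun z hz ↦ ?_) hr
  rw [mem_closedBall, dist_eq_norm]
  linarith [norm_sub_le (f z) (f x), hC z hz, hC x (mem_ball_self hr)]

theorem exists_lipschitzOnWith_of_eventually_differentiableAt
    (hf : ∀ᶠ z in 𝓝 x, DifferentiableAt ℂ f z) :
    ∃ K, ∃ s ∈ 𝓝 x, LipschitzOnWith K f s := by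
  have hbounded : ∀ᶠ z in 𝓝 x, ‖f z‖ < ‖f x‖ + 1 :=
    hf.self_of_nhds.continuousAt.norm.eventually_lt_const (lt_add_one _)
  obtain ⟨r, hr, hball⟩ := eventually_nhds_iff_ball.1 (hf.and hbounded)
  have hsub {z : E} (hz : z ∈ ball x (r / 2)) : ball z (r / 2) ⊆ ball x r :=
    ball_subset_ball' (by linarith [mem_ball.1 hz])
  refine ⟨(2 * (‖f x‖ + 1) / (r / 2)).toNNReal, ball x (r / 2), ball_mem_nhds x (half_pos hr),
    (convex_ball x (r / 2)).lipschitzOnWith_of_nnnorm_fderiv_le (𝕜 := ℂ)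
      (fun z hz ↦ (hball z (ball_subset_ball (half_le_self hr.le) hz)).1) fun z hz ↦ ?_⟩
  rw [← NNReal.coe_le_coe, coe_nnnorm, Real.coe_toNNReal _ (by positivity)]
  exact norm_fderiv_le_two_mul_div_of_norm_le (half_pos hr)
    (fun w hw ↦ (hball w (hsub hz hw)).1.differentiableWithinAt)
    fun w hw ↦ (hball w (hsub hz hw)).2.le

theorem exists_lipschitzOnWith_fderiv_of_eventually_differentiableAt
    (hf : ∀ᶠ z in 𝓝 x, DifferentiableAt ℂ f z) :
    ∃ K, ∃ s ∈ 𝓝 x, LipschitzOnWith K (fderiv ℂ f) s := by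
  obtain ⟨K, s, hs, hLip⟩ := exists_lipschitzOnWith_of_eventually_differentiableAt hf
  obtain ⟨r, hr, hball⟩ := eventually_nhds_iff_ball.1 (hf.and hs)
  have hsub {z : E} (hz : z ∈ ball x (r / 2)) : ball z (r / 2) ⊆ ball x r :=
    ball_subset_ball' (by linarith [mem_ball.1 hz])
  refine ⟨(2 * K / (r / 2)).toNNReal, ball x (r / 2), ball_mem_nhds x (half_pos hr),
    LipschitzOnWith.of_dist_le_mul fun y hy z hz ↦ ?_⟩
  -- The Cauchy estimate applied to `w ↦ f (w + (y - z)) - f w` bounds `f' y - f' z`.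
  have shift_mem {w : E} (hw : w ∈ ball z (r / 2)) : w + (y - z) ∈ ball x r :=
    hsub hy (by simpa [dist_eq_norm, add_sub_right_comm, add_sub_assoc] using hw)
  have hdiff {w : E} (hw : w ∈ ball z (r / 2)) :
      HasFDerivAt (fun w ↦ f (w + (y - z)) - f w)
        (fderiv ℂ f (w + (y - z)) - fderiv ℂ f w) w :=
    ((hasFDerivAt_comp_add_right _).2 (hball _ (shift_mem hw)).1.hasFDerivAt).sub
      (hball w (hsub hz hw)).1.hasFDerivAt
  have hbound {w : E} (hw : w ∈ ball z (r / 2)) : ‖f (w + (y - z)) - f w‖ ≤ K * dist y z := by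
    simpa [dist_eq_norm] using
      hLip.dist_le_mul _ (hball _ (shift_mem hw)).2 w (hball w (hsub hz hw)).2
  have hcauchy := norm_fderiv_le_two_mul_div_of_norm_le (half_pos hr)
    (fun w hw ↦ (hdiff hw).differentiableAt.differentiableWithinAt) fun w hw ↦ hbound hw
  rw [(hdiff (mem_ball_self (half_pos hr))).fderiv, add_sub_cancel] at hcauchy
  rw [Real.coe_toNNReal _ (by positivity), dist_eq_norm (fderiv ℂ f y)]
  exact hcauchy.trans_eq (by ring)

theorem uniformCauchySeqOn_fderiv_ball {ι : Type*} {l : Filter ι} {u : ι → E → F} {r : ℝ}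
    (hr : 0 < r) (hu : UniformCauchySeqOn u l (ball x r))
    (hdiff : ∀ᶠ i in l, DifferentiableOn ℂ (u i) (ball x r)) :
    UniformCauchySeqOn (fun i ↦ fderiv ℂ (u i)) l (ball x (r / 2)) := by
  intro U hU
  obtain ⟨ε, hε, hεU⟩ := Metric.mem_uniformity_dist.1 hU
  have hclose := hu _ (dist_mem_uniformity (by positivity : 0 < ε * r / 8))
  filter_upwards [hclose, hdiff.prod_mk hdiff] with ⟨i, j⟩ hij ⟨hi, hj⟩ z hz
  have hsub : ball z (r / 2) ⊆ ball x r := ball_subset_ball' (by linarith [mem_ball.1 hz])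
  have hnhds : ball x r ∈ 𝓝 z := isOpen_ball.mem_nhds (hsub (mem_ball_self (half_pos hr)))
  have hcauchy : ‖fderiv ℂ (u i - u j) z‖ ≤ 2 * (ε * r / 8) / (r / 2) :=
    norm_fderiv_le_two_mul_div_of_norm_le (half_pos hr) ((hi.sub hj).mono hsub) fun w hw ↦ by
      simpa [dist_eq_norm] using (hij w (hsub hw)).le
  rw [fderiv_sub (hi.differentiableAt hnhds) (hj.differentiableAt hnhds)] at hcauchy
  refine hεU (lt_of_eq_of_lt (dist_eq_norm _ _) (hcauchy.trans_lt ?_))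
  field_simp
  linarith

theorem differentiableAt_of_tendstoUniformlyOn [CompleteSpace F] {ι : Type*} {l : Filter ι}
    [l.NeBot] {u : ι → E → F} {g : E → F} {s : Set E} (hs : s ∈ 𝓝 x)
    (hu : TendstoUniformlyOn u g l s) (hdiff : ∀ᶠ i in l, DifferentiableOn ℂ (u i) s) :
    DifferentiableAt ℂ g x := by
  obtain ⟨r, hr, hball⟩ := Metric.mem_nhds_iff.1 hs
  have hcauchy := uniformCauchySeqOn_fderiv_ball hr (hu.mono hball).uniformCauchySeqOn
    (hdiff.mono fun i hi ↦ hi.mono hball)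
  have hnhds : ball x (r / 2) ∈ 𝓝 x := ball_mem_nhds x (half_pos hr)
  have hlim : ∀ z ∈ ball x (r / 2), ∃ A, Tendsto (fun i ↦ fderiv ℂ (u i) z) l (𝓝 A) :=
    fun z hz ↦ cauchy_map_iff_exists_tendsto.1 (hcauchy.cauchy_map hz)
  choose! g' hg' using hlim
  have hderiv := (hcauchy.tendstoUniformlyOn_of_tendsto hg').tendstoUniformlyOnFilter.mono_right
    (le_principal_iff.2 hnhds)
  refine (hasFDerivAt_of_tendstoUniformlyOnFilter (f := u) hderiv ?_ ?_).differentiableAt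
  · filter_upwards [hdiff.prod_mk (eventually_mem_nhds_iff.2 hs)] with p hp
    exact (hp.1.differentiableAt hp.2).hasFDerivAt
  · filter_upwards [hs] with z hz using hu.tendsto_at hz

theorem exists_tendstoUniformlyOn_differenceQuotient
    (hf : ∀ᶠ z in 𝓝 x, DifferentiableAt ℂ f z) (v : E) :
    ∃ s ∈ 𝓝 x, TendstoUniformlyOn (fun (h : ℂ) z ↦ h⁻¹ • (f (z + h • v) - f z))
      (fun z ↦ fderiv ℂ f z v) (𝓝[≠] 0) s := by
  obtain ⟨K, t, ht, hLip⟩ := exists_lipschitzOnWith_fderiv_of_eventually_differentiableAt hf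
  obtain ⟨r, hr, hball⟩ := eventually_nhds_iff_ball.1 (hf.and ht)
  obtain ⟨s, hs, hshift⟩ := exists_eventually_forall_add_smul_mem (𝕜 := ℂ) (ball_mem_nhds x hr) v
  refine ⟨s ∩ ball x r, inter_mem hs (ball_mem_nhds x hr),
    Metric.tendstoUniformlyOn_iff.2 fun ε hε ↦ ?_⟩
  have herror : ∀ᶠ h in 𝓝 (0 : ℂ), K * ‖h‖ * ‖v‖ ^ 2 < ε :=
    (by fun_prop : Continuous fun h : ℂ ↦ K * ‖h‖ * ‖v‖ ^ 2).continuousAt.eventually_lt_const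
      (by simpa using hε)
  filter_upwards [hshift.filter_mono nhdsWithin_le_nhds, herror.filter_mono nhdsWithin_le_nhds,
    eventually_mem_nhdsWithin] with h hmem hlt hne z hz
  have htaylor := norm_sub_sub_fderiv_le_of_lipschitzOnWith (convex_ball x r)
    (fun w hw ↦ (hball w hw).1) (hLip.mono fun w hw ↦ (hball w hw).2) (hmem z hz.1) hz.2
  rw [add_sub_cancel_left, map_smul, norm_smul] at htaylor
  have hne : h ≠ 0 := hne
  calc dist (fderiv ℂ f z v) (h⁻¹ • (f (z + h • v) - f z))
      = ‖h⁻¹ • (f (z + h • v) - f z - h • fderiv ℂ f z v)‖ := by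
        rw [dist_comm, dist_eq_norm, smul_sub _ _ (h • _), inv_smul_smul₀ hne]
    _ ≤ ‖h‖⁻¹ * (K * (‖h‖ * ‖v‖) ^ 2) := by rw [norm_smul, norm_inv]; gcongr
    _ = K * ‖h‖ * ‖v‖ ^ 2 := by field_simp
    _ < ε := hlt

theorem differentiableAt_fderiv_apply [CompleteSpace F]
    (hf : ∀ᶠ z in 𝓝 x, DifferentiableAt ℂ f z) (v : E) :
    DifferentiableAt ℂ (fun z ↦ fderiv ℂ f z v) x := by
  obtain ⟨s, hs, hlim⟩ := exists_tendstoUniformlyOn_differenceQuotient hf v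
  obtain ⟨t, ht, hshift⟩ := exists_eventually_forall_add_smul_mem (𝕜 := ℂ) hf v
  refine differentiableAt_of_tendstoUniformlyOn (inter_mem hs (inter_mem ht hf))
    (hlim.mono Set.inter_subset_left) ?_
  filter_upwards [hshift.filter_mono nhdsWithin_le_nhds] with h hmem z ⟨_, hzt, hz⟩
  exact ((((differentiableAt_comp_add_right _).2 (hmem z hzt)).sub hz).const_smul
    h⁻¹).differentiableWithinAt

end Holomorphic

theorem differentiableAt_det {𝕜 E ι : Type*} [NontriviallyNormedField 𝕜] [NormedAddCommGroup E]
    [NormedSpace 𝕜 E] [Fintype ι] [DecidableEq ι] {A : E → Matrix ι ι 𝕜} {x : E}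
    (hA : ∀ i j, DifferentiableAt 𝕜 (fun z ↦ A z i j) x) :
    DifferentiableAt 𝕜 (fun z ↦ (A z).det) x := by
  simp only [Matrix.det_apply]
  fun_prop

theorem hasFDerivAt_mulVec_sub {𝕜 ι κ : Type*} [NontriviallyNormedField 𝕜] [CompleteSpace 𝕜]
    [Finite ι] [Fintype κ] [DecidableEq κ] (A : Matrix ι κ 𝕜) (b z : κ → 𝕜) :
    HasFDerivAt (fun w ↦ A.mulVec (w - b)) (Matrix.toLin' A).toContinuousLinearMap z :=
  have := Fintype.ofFinite ι
  (hasFDerivAt_comp_sub b).2 (Matrix.toLin' A).toContinuousLinearMap.hasFDerivAt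

section Jacobian

variable {n : ℕ} {F σ τ : (Fin n → ℂ) → Fin n → ℂ} {z : Fin n → ℂ}

theorem jac_eq_toMatrix'_fderiv (hF : DifferentiableAt ℂ F z) :
    Jac n F z = LinearMap.toMatrix' (fderiv ℂ F z : (Fin n → ℂ) →ₗ[ℂ] Fin n → ℂ) := by
  ext i j
  have hcoord := (hasFDerivAt_pi'.1 hF.hasFDerivAt i).fderiv
  simp [Jac, pd, hcoord, LinearMap.toMatrix'_apply]

theorem jac_comp (hF : DifferentiableAt ℂ F (σ z)) (hσ : DifferentiableAt ℂ σ z) :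
    Jac n (F ∘ σ) z = Jac n F (σ z) * Jac n σ z := by
  rw [jac_eq_toMatrix'_fderiv (hF.comp z hσ), jac_eq_toMatrix'_fderiv hF,
    jac_eq_toMatrix'_fderiv hσ, fderiv_comp z hF hσ, ← LinearMap.toMatrix'_comp]
  rfl

theorem jDet_comp (hF : DifferentiableAt ℂ F (σ z)) (hσ : DifferentiableAt ℂ σ z) :
    JDet n (F ∘ σ) z = JDet n F (σ z) * JDet n σ z := by
  rw [JDet, jac_comp hF hσ, Matrix.det_mul, JDet, JDet]

theorem jDet_mulVec_sub (A : Matrix (Fin n) (Fin n) ℂ) (b : Fin n → ℂ) :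
    JDet n (fun w ↦ A.mulVec (w - b)) z = A.det := by
  have hA := hasFDerivAt_mulVec_sub A b z
  rw [JDet, jac_eq_toMatrix'_fderiv hA.differentiableAt, hA.fderiv]
  simp

theorem jDet_ne_zero_of_eventually_leftInverse (hτ : DifferentiableAt ℂ τ (σ z))
    (hσ : DifferentiableAt ℂ σ z) (hτσ : τ ∘ σ =ᶠ[𝓝 z] id) : JDet n σ z ≠ 0 := by
  have hid : JDet n (τ ∘ σ) z = 1 := by
    rw [JDet, jac_eq_toMatrix'_fderiv (hτ.comp z hσ), hτσ.fderiv_eq]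
    simp
  rw [jDet_comp hτ hσ] at hid
  exact right_ne_zero_of_mul_eq_one hid

theorem differentiableAt_jDet (hF : ∀ᶠ w in 𝓝 z, DifferentiableAt ℂ F w) :
    DifferentiableAt ℂ (JDet n F) z :=
  differentiableAt_det fun i _ ↦
    differentiableAt_fderiv_apply (hF.mono fun _ hw ↦ differentiableAt_pi.1 hw i) _

theorem pd_comp {f : (Fin n → ℂ) → ℂ} (hf : DifferentiableAt ℂ f (σ z))
    (hσ : DifferentiableAt ℂ σ z) (i : Fin n) :
    pd n i (f ∘ σ) z = ∑ j, pd n j f (σ z) * Jac n σ z j i := by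
  rw [pd, fderiv_comp z hf hσ, ContinuousLinearMap.comp_apply,
    pi_eq_sum_univ' (fderiv ℂ σ z (Pi.single i 1)), map_sum]
  simp [jac_eq_toMatrix'_fderiv hσ, pd, LinearMap.toMatrix'_apply, mul_comm]

theorem pd_mul {f g : (Fin n → ℂ) → ℂ} (hf : DifferentiableAt ℂ f z)
    (hg : DifferentiableAt ℂ g z) (i : Fin n) :
    pd n i (f * g) z = f z * pd n i g z + g z * pd n i f z := by
  simp [pd, fderiv_mul hf hg]

theorem jDet_koebe (hF : DifferentiableAt ℂ F (σ z)) (hσ : DifferentiableAt ℂ σ z) :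
    JDet n (Koebe n F σ) z =
      (JDet n F (σ 0) * JDet n σ 0)⁻¹ * (JDet n F (σ z) * JDet n σ z) := by
  have hdet := jDet_comp (F := fun w ↦ ((Jac n σ 0)⁻¹ * (Jac n F (σ 0))⁻¹).mulVec (w - F (σ 0)))
    (hasFDerivAt_mulVec_sub _ _ _).differentiableAt (hF.comp z hσ)
  rw [jDet_mulVec_sub, jDet_comp hF hσ, Matrix.det_mul, Matrix.det_nonsing_inv,
    Matrix.det_nonsing_inv, Ring.inverse_eq_inv, Ring.inverse_eq_inv, ← mul_inv_rev] at hdet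
  exact hdet

end Jacobian

theorem isOpen_eball (n : ℕ) : IsOpen (eball n) :=
  isOpen_lt (f := euclNorm n) (by unfold euclNorm; fun_prop) continuous_const

theorem zero_mem_eball (n : ℕ) : 0 ∈ eball n := by
  simp [eball, euclNorm]

theorem eventually_differentiableAt_of_mem_eball {n : ℕ} {F : (Fin n → ℂ) → Fin n → ℂ}
    (hF : DifferentiableOn ℂ F (eball n)) {z : Fin n → ℂ} (hz : z ∈ eball n) :
    ∀ᶠ w in 𝓝 z, DifferentiableAt ℂ F w :=
  hF.eventually_differentiableAt ((isOpen_eball n).mem_nhds hz)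

theorem IsAutB.jDet_ne_zero {n : ℕ} {σ : (Fin n → ℂ) → Fin n → ℂ} (hσ : IsAutB n σ)
    {z : Fin n → ℂ} (hz : z ∈ eball n) : JDet n σ z ≠ 0 := by
  obtain ⟨hσdiff, hσbij, τ, hτdiff, hτσ, -⟩ := hσ
  have hnhds {w : Fin n → ℂ} (hw : w ∈ eball n) : eball n ∈ 𝓝 w := (isOpen_eball n).mem_nhds hw
  exact jDet_ne_zero_of_eventually_leftInverse
    (hτdiff.differentiableAt (hnhds (hσbij.mapsTo hz))) (hσdiff.differentiableAt (hnhds hz))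
    (eventually_of_mem (hnhds hz) hτσ)

theorem stmt_6_general (n : ℕ) (F σ : (Fin n → ℂ) → Fin n → ℂ)
    (hF : ∀ᶠ w in 𝓝 (σ 0), DifferentiableAt ℂ F w) (hJF : JDet n F (σ 0) ≠ 0)
    (hσ : ∀ᶠ z in 𝓝 0, DifferentiableAt ℂ σ z) (hJσ : JDet n σ 0 ≠ 0) (i : Fin n) :
    pd n i (JDet n (Koebe n F σ)) 0 =
      (∑ j, (pd n j (JDet n F) (σ 0) / JDet n F (σ 0)) * Jac n σ 0 j i)
        + pd n i (JDet n σ) 0 / JDet n σ 0 := by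
  have hσ0 := hσ.self_of_nhds
  have hJFdiff := differentiableAt_jDet hF
  have hprod : DifferentiableAt ℂ (JDet n F ∘ σ * JDet n σ) 0 :=
    (hJFdiff.comp 0 hσ0).mul (differentiableAt_jDet hσ)
  have hJG : JDet n (Koebe n F σ) =ᶠ[𝓝 0]
      fun z ↦ (JDet n F (σ 0) * JDet n σ 0)⁻¹ * (JDet n F ∘ σ * JDet n σ) z := by
    filter_upwards [hσ, hσ0.continuousAt.eventually hF] with z hσz hFz using jDet_koebe hFz hσz
  calc pd n i (JDet n (Koebe n F σ)) 0
      = (JDet n F (σ 0) * JDet n σ 0)⁻¹ * pd n i (JDet n F ∘ σ * JDet n σ) 0 := by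
        rw [pd, hJG.fderiv_eq, fderiv_const_mul hprod]; rfl
    _ = pd n i (JDet n F ∘ σ) 0 / JDet n F (σ 0) + pd n i (JDet n σ) 0 / JDet n σ 0 := by
        rw [pd_mul (hJFdiff.comp 0 hσ0) (differentiableAt_jDet hσ), Function.comp_apply]
        field_simp
        ring
    _ = (∑ j, (pd n j (JDet n F) (σ 0) / JDet n F (σ 0)) * Jac n σ 0 j i)
        + pd n i (JDet n σ) 0 / JDet n σ 0 := by
        simp only [pd_comp hJFdiff hσ0, Finset.sum_div, div_mul_eq_mul_div]

/-- for the Koebe transform `G` of `F₀` by `σ`,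
`∇(JG)(0) = (∇(JF₀)(ζ)/JF₀(ζ))·Dσ(0) + ∇(Jσ)(0)/Jσ(0)` (row vectors). -/
theorem stmt_6 (n : ℕ) (hn : 2 ≤ n) (F₀ : (Fin n → ℂ) → (Fin n → ℂ))
    (hF₀hol : DifferentiableOn ℂ F₀ (eball n))
    (hF₀J : ∀ z ∈ eball n, JDet n F₀ z ≠ 0)
    (hF₀0 : F₀ 0 = 0) (hF₀D : Jac n F₀ 0 = 1)
    (σ : (Fin n → ℂ) → (Fin n → ℂ)) (hσ : IsAutB n σ)
    (ζ : Fin n → ℂ) (hζ : ζ = σ 0) :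
    ∀ i : Fin n, pd n i (JDet n (Koebe n F₀ σ)) 0 =
      (∑ j, (pd n j (JDet n F₀) ζ / JDet n F₀ ζ) * Jac n σ 0 j i)
        + pd n i (JDet n σ) 0 / JDet n σ 0 := by
  subst hζ
  have hσ0 := hσ.2.1.mapsTo (zero_mem_eball n)
  exact stmt_6_general n F₀ σ (eventually_differentiableAt_of_mem_eball hF₀hol hσ0) (hF₀J _ hσ0)
    (eventually_differentiableAt_of_mem_eball hσ.1 (zero_mem_eball n))
    (hσ.jDet_ne_zero (zero_mem_eball n))

end
end

section
/- (Lemma 3.1) Let n ≥ 2 and let F₀ : Bⁿ → ℂⁿ be locally biholomorphic with F₀(0) = 0 and DF₀(0) = Id (so JF₀(0) = 1). Write Λ = ∇(JF₀)(0) = (λ₁,…,λₙ), B_{ij} = Σ_{k=1}^n S^k_{ij}F₀(0)·λ_k, B⁰_{ij} = S⁰_{ij}F₀(0), and A_{ij} = B_{ij} − (n+1)B⁰_{ij} + λ_iλ_j/(n+1). Then the holomorphic map φ(ζ) = ∇(JF₀)(ζ)/JF₀(ζ) satisfies φ(0) = Λ and Dφ(0) = A; equivalently, φ(ζ) = Λ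 + A·ζ + O(|ζ|²) as ζ → 0, and ∂²(log JF₀)/∂z_j∂z_i (0) = A_{ij} for all i,j. -/
open scoped BigOperators

noncomputable section

/-!
Write `J = JF₀` and `φ = ∇J / J`. Since `u₀ ^ (n + 1) * J = 1`, logarithmic differentiation gives
`φ = -(n + 1) ∇u₀ / u₀`, and differentiating once more expresses `Dφ` through the first and second
derivatives of `u₀`. The definition of `S⁰ᵢⱼ` trades `∂ᵢ∂ⱼu₀` for `S⁰ᵢⱼ` and `∑ₖ Sᵏᵢⱼ ∂ₖu₀`, and
`∇u₀ = -u₀ φ / (n + 1)` removes the remaining first derivatives of `u₀`.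

The second derivatives exist because a function that is complex differentiable on an open set of a
finite-dimensional space is smooth: its difference quotients in a fixed direction converge locally
uniformly by the Schwarz lemma, and a uniform limit of holomorphic functions is holomorphic.
-/

section Holomorphic

open Filter Metric Set Topology

variable {E F : Type*} [NormedAddCommGroup E] [NormedSpace ℂ E]
  [NormedAddCommGroup F] [NormedSpace ℂ F]

theorem norm_fderiv_le_two_mul_div_of_forall_mem_ball {f : E → F} {c : E} {R C : ℝ} (hR : 0 < R)
    (hf : DifferentiableOn ℂ f (ball c R)) (hC : ∀ z ∈ ball c R, ‖f z‖ ≤ C) :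
    ‖fderiv ℂ f c‖ ≤ 2 * C / R := by
  refine Complex.norm_fderiv_le_div_of_mapsTo_ball hf (fun z hz => ?_) hR
  rw [mem_closedBall, dist_eq_norm]
  linarith [norm_sub_le (f z) (f c), hC z hz, hC c (mem_ball_self hR)]

theorem uniformCauchySeqOn_fderiv_half_ball {ι : Type*} {l : Filter ι} {f : ι → E → F} {c : E}
    {R : ℝ} (hR : 0 < R) (hf : ∀ᶠ t in l, DifferentiableOn ℂ (f t) (ball c R))
    (hcauchy : UniformCauchySeqOn f l (ball c R)) :
    UniformCauchySeqOn (fun t => fderiv ℂ (f t)) l (ball c (R / 2)) := by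
  intro V hV
  obtain ⟨ε, hε, hεV⟩ := mem_uniformity_dist.1 hV
  have hclose := hcauchy _ (dist_mem_uniformity (show 0 < ε * R / 8 by positivity))
  filter_upwards [hclose, hf.prod_mk hf] with ⟨s, t⟩ hst ⟨hs, ht⟩ w hw
  have hsub : ball w (R / 2) ⊆ ball c R := ball_subset_ball' (by linarith [mem_ball.1 hw])
  have hcenter : ball c R ∈ 𝓝 w := isOpen_ball.mem_nhds (hsub (mem_ball_self (half_pos hR)))
  refine hεV ?_
  rw [dist_eq_norm, ← fderiv_sub (hs.differentiableAt hcenter) (ht.differentiableAt hcenter)]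
  calc ‖fderiv ℂ (f s - f t) w‖
      ≤ 2 * (ε * R / 8) / (R / 2) :=
        norm_fderiv_le_two_mul_div_of_forall_mem_ball (half_pos hR) ((hs.sub ht).mono hsub)
          fun z hz => by simpa [dist_eq_norm] using (hst z (hsub hz)).le
    _ = ε / 2 := by field_simp; norm_num
    _ < ε := half_lt_self hε

theorem differentiableAt_of_tendstoUniformlyOn_ball [CompleteSpace F] {ι : Type*} {l : Filter ι}
    [NeBot l] {f : ι → E → F} {g : E → F} {c : E} {R : ℝ} (hR : 0 < R)
    (hf : ∀ᶠ t in l, DifferentiableOn ℂ (f t) (ball c R))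
    (hfg : TendstoUniformlyOn f g l (ball c R)) : DifferentiableAt ℂ g c := by
  have hcauchy := uniformCauchySeqOn_fderiv_half_ball hR hf hfg.uniformCauchySeqOn
  have hlim : ∀ w ∈ ball c (R / 2), ∃ L, Tendsto (fun t => fderiv ℂ (f t) w) l (𝓝 L) :=
    fun w hw => cauchy_map_iff_exists_tendsto.1 (hcauchy.cauchy_map hw)
  choose! g' hg' using hlim
  have hball : ball c (R / 2) ∈ 𝓝 c := ball_mem_nhds c (half_pos hR)
  have hderiv : TendstoUniformlyOnFilter (fun t => fderiv ℂ (f t)) g' l (𝓝 c) :=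
    (hcauchy.tendstoUniformlyOn_of_tendsto hg').tendstoUniformlyOnFilter.mono_right
      (le_principal_iff.2 hball)
  refine (hasFDerivAt_of_tendstoUniformlyOnFilter (f := f) hderiv ?_ ?_).differentiableAt
  · filter_upwards [hf.prod_mk (ball_mem_nhds c hR)] with ⟨t, w⟩ ⟨ht, hw⟩
    exact (ht.differentiableAt (isOpen_ball.mem_nhds hw)).hasFDerivAt
  · filter_upwards [ball_mem_nhds c hR] with w hw using hfg.tendsto_at hw

theorem norm_sub_sub_fderiv_le_of_mapsTo_ball {f : E → F} {c z : E} {R M : ℝ}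
    (hf : DifferentiableOn ℂ f (ball c R)) (hM : MapsTo f (ball c R) (closedBall (f c) M))
    (hz : z ∈ ball c R) :
    ‖f z - f c - fderiv ℂ f c (z - c)‖ ≤ 2 * M * (dist z c / R) ^ 2 := by
  have hR : 0 < R := nonempty_ball.1 ⟨z, hz⟩
  have hderiv : ‖fderiv ℂ f c‖ ≤ M / R := Complex.norm_fderiv_le_div_of_mapsTo_ball hf hM hR
  set g : E → F := fun w => f w - f c - fderiv ℂ f c (w - c) with hg
  have hgc : g c = 0 := by simp [hg]
  have hgd : DifferentiableOn ℂ g (ball c R) := by fun_prop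
  have hgM : MapsTo g (ball c R) (closedBall (g c) (2 * M)) := fun w hw => by
    have hfw : ‖f w - f c‖ ≤ M := by simpa [dist_eq_norm] using hM hw
    have hlin : ‖fderiv ℂ f c (w - c)‖ ≤ M := calc
      ‖fderiv ℂ f c (w - c)‖ ≤ M / R * R := (fderiv ℂ f c).le_of_opNorm_le_of_le hderiv
        (by simpa [dist_eq_norm] using (mem_ball.1 hw).le)
      _ = M := div_mul_cancel₀ M hR.ne'
    rw [hgc, mem_closedBall_zero_iff]
    linarith [norm_sub_le (f w - f c) (fderiv ℂ f c (w - c))]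
  have hgo : (g · - g c) =o[𝓝 c] fun w => ‖w - c‖ ^ 1 := by
    simpa [hg] using
      (hf.differentiableAt (ball_mem_nhds c hR)).hasFDerivAt.isLittleO.norm_right
  simpa only [hgc, dist_zero_right] using
    Complex.dist_le_mul_div_pow_of_mapsTo_ball_of_isLittleO hgd hgM hgo hz

theorem eventually_norm_smul_lt (e : E) {r : ℝ} (hr : 0 < r) :
    ∀ᶠ t : ℂ in 𝓝[≠] 0, ‖t • e‖ < r :=
  nhdsWithin_le_nhds <| ContinuousAt.eventually_lt (by fun_prop) continuousAt_const
    (by simpa using hr)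

theorem dist_fderiv_apply_quotient_le {f : E → F} {c e : E} {R M : ℝ} {t : ℂ}
    (hf : DifferentiableOn ℂ f (ball c R)) (hM : MapsTo f (ball c R) (closedBall (f c) M))
    (ht : t ≠ 0) (hte : ‖t • e‖ < R) :
    dist (fderiv ℂ f c e) (t⁻¹ • (f (c + t • e) - f c)) ≤ 2 * M * (‖e‖ / R) ^ 2 * ‖t‖ := by
  have htaylor := norm_sub_sub_fderiv_le_of_mapsTo_ball hf hM
    (show c + t • e ∈ ball c R by simpa using hte)
  calc dist (fderiv ℂ f c e) (t⁻¹ • (f (c + t • e) - f c))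
      = ‖t‖⁻¹ * ‖f (c + t • e) - f c - fderiv ℂ f c (c + t • e - c)‖ := by
        rw [dist_comm, dist_eq_norm, ← norm_inv, ← norm_smul, add_sub_cancel_left, map_smul,
          smul_sub t⁻¹ (f (c + t • e) - f c), inv_smul_smul₀ ht]
    _ ≤ ‖t‖⁻¹ * (2 * M * (dist (c + t • e) c / R) ^ 2) := by gcongr
    _ = 2 * M * (‖e‖ / R) ^ 2 * ‖t‖ := by
        rw [dist_self_add_left, norm_smul]
        field_simp

theorem tendstoUniformlyOn_quotient_fderiv_apply {f : E → F} {c : E} {R M : ℝ} (hR : 0 < R)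
    (hf : DifferentiableOn ℂ f (ball c R)) (hM : MapsTo f (ball c R) (closedBall (f c) M))
    (e : E) :
    TendstoUniformlyOn (fun (t : ℂ) w => t⁻¹ • (f (w + t • e) - f w)) (fun w => fderiv ℂ f w e)
      (𝓝[≠] 0) (ball c (R / 2)) := by
  rw [Metric.tendstoUniformlyOn_iff]
  intro ε hε
  have hlt : ∀ᶠ t : ℂ in 𝓝[≠] 0, 2 * (2 * M) * (‖e‖ / (R / 2)) ^ 2 * ‖t‖ < ε :=
    nhdsWithin_le_nhds <| ContinuousAt.eventually_lt (by fun_prop) continuousAt_const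
      (by simpa using hε)
  filter_upwards [eventually_norm_smul_lt e (half_pos hR), hlt, self_mem_nhdsWithin]
    with t hte htε ht w hw
  have hsub : ball w (R / 2) ⊆ ball c R := ball_subset_ball' (by linarith [mem_ball.1 hw])
  have hMw : MapsTo f (ball w (R / 2)) (closedBall (f w) (2 * M)) := fun z hz => by
    have hz' := mem_closedBall.1 (hM (hsub hz))
    have hw' := mem_closedBall.1 (hM (hsub (mem_ball_self (half_pos hR))))
    rw [mem_closedBall]
    linarith [dist_triangle_right (f z) (f w) (f c)]
  exact (dist_fderiv_apply_quotient_le (hf.mono hsub) hMw ht hte).trans_lt htε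

theorem differentiableOn_fderiv_apply [CompleteSpace F] {f : E → F} {U : Set E} (hU : IsOpen U)
    (hf : DifferentiableOn ℂ f U) (e : E) : DifferentiableOn ℂ (fun w => fderiv ℂ f w e) U := by
  intro c hc
  have hbounded : ∀ᶠ w in 𝓝 c, f w ∈ closedBall (f c) 1 :=
    (hf.differentiableAt (hU.mem_nhds hc)).continuousAt (closedBall_mem_nhds _ one_pos)
  obtain ⟨R, hR, hball⟩ := Metric.mem_nhds_iff.1 (inter_mem (hU.mem_nhds hc) hbounded)
  have hfR : DifferentiableOn ℂ f (ball c R) := hf.mono fun w hw => (hball hw).1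
  have hquotient : ∀ᶠ t : ℂ in 𝓝[≠] 0,
      DifferentiableOn ℂ (fun w => t⁻¹ • (f (w + t • e) - f w)) (ball c (R / 2)) := by
    filter_upwards [eventually_norm_smul_lt e (half_pos hR)] with t hte
    have hshift : MapsTo (fun w => w + t • e) (ball c (R / 2)) (ball c R) := fun w hw => by
      have hdist : dist (w + t • e) w < R / 2 := by simpa using hte
      rw [mem_ball] at hw ⊢
      linarith [dist_triangle (w + t • e) w c]
    exact ((hfR.comp (by fun_prop) hshift).sub
      (hfR.mono (ball_subset_ball (half_le_self hR.le)))).const_smul t⁻¹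
  exact (differentiableAt_of_tendstoUniformlyOn_ball (half_pos hR) hquotient
    (tendstoUniformlyOn_quotient_fderiv_apply hR hfR (fun w hw => (hball hw).2)
      e)).differentiableWithinAt

theorem contDiffOn_nat_of_differentiableOn [FiniteDimensional ℂ E] [CompleteSpace F] {f : E → F}
    {U : Set E} (hU : IsOpen U) (hf : DifferentiableOn ℂ f U) (m : ℕ) : ContDiffOn ℂ m f U := by
  induction m generalizing f with
  | zero => exact contDiffOn_zero.2 hf.continuousOn
  | succ m ih =>
    rw [Nat.cast_add_one]
    refine contDiffOn_succ_of_fderiv_apply hf (by simp) fun e => ?_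
    exact (ih (differentiableOn_fderiv_apply hU hf e)).congr fun w hw => by
      rw [fderivWithin_of_isOpen hU hw]

theorem contDiffAt_nat_of_eventually_differentiableAt [FiniteDimensional ℂ E] [CompleteSpace F]
    {f : E → F} {c : E} (hf : ∀ᶠ w in 𝓝 c, DifferentiableAt ℂ f w) (m : ℕ) :
    ContDiffAt ℂ m f c := by
  obtain ⟨U, hUf, hU, hcU⟩ := _root_.eventually_nhds_iff.1 hf
  exact (contDiffOn_nat_of_differentiableOn hU
    (fun w hw => (hUf w hw).differentiableWithinAt) m).contDiffAt (hU.mem_nhds hcU)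

end Holomorphic

theorem hasFDerivAt_fun_div {𝕜 E : Type*} [NontriviallyNormedField 𝕜] [NormedAddCommGroup E]
    [NormedSpace 𝕜 E] {f g : E → 𝕜} {f' g' : E →L[𝕜] 𝕜} {z : E} (hf : HasFDerivAt f f' z)
    (hg : HasFDerivAt g g' z) (hz : g z ≠ 0) :
    HasFDerivAt (fun w => f w / g w) ((g z ^ 2)⁻¹ • (g z • f' - f z • g')) z := by
  have hinv : HasFDerivAt (fun w => (g w)⁻¹) (-(g z ^ 2)⁻¹ • g') z :=
    (hasDerivAt_inv hz).comp_hasFDerivAt z hg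
  simp only [div_eq_mul_inv]
  refine (hf.fun_mul hinv).congr_fderiv ?_
  ext v
  simp only [smul_apply, add_apply, sub_apply, smul_eq_mul]
  field_simp
  ring

section PartialDerivatives

open Topology

variable {n : ℕ} {u : (Fin n → ℂ) → ℂ} {z : Fin n → ℂ}

theorem differentiableAt_pd (hu : ContDiffAt ℂ 2 u z) (i : Fin n) :
    DifferentiableAt ℂ (fun w => pd n i u w) z :=
  ((hu.fderiv_right (m := 1) (by norm_num)).differentiableAt one_ne_zero).clm_apply
    (differentiableAt_const _)

theorem pd2_eq_fderiv_fderiv (hu : ContDiffAt ℂ 2 u z) (i j : Fin n) :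
    pd2 n i j u z = fderiv ℂ (fderiv ℂ u) z (Pi.single i 1) (Pi.single j 1) := by
  have hfderiv := (hu.fderiv_right (m := 1) (by norm_num)).differentiableAt one_ne_zero
  simp only [pd2, pd]
  simp [fderiv_clm_apply hfderiv (differentiableAt_const _)]

theorem pd2_comm (hu : ContDiffAt ℂ 2 u z) (i j : Fin n) : pd2 n i j u z = pd2 n j i u z := by
  rw [pd2_eq_fderiv_fderiv hu, pd2_eq_fderiv_fderiv hu]
  exact (hu.isSymmSndFDerivAt (by simp)).eq _ _

theorem pd_pd_div (hu : ContDiffAt ℂ 2 u z) (hz : u z ≠ 0) (i j : Fin n) :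
    pd n j (fun w => pd n i u w / u w) z =
      pd2 n i j u z / u z - pd n i u z / u z * (pd n j u z / u z) := by
  have hquot := hasFDerivAt_fun_div (differentiableAt_pd hu i).hasFDerivAt
    (hu.differentiableAt two_ne_zero).hasFDerivAt hz
  rw [pd2_comm hu, pd, hquot.fderiv]
  simp only [pd2, pd, sub_apply, smul_apply, smul_eq_mul]
  field_simp

variable {J : (Fin n → ℂ) → ℂ} {m : ℕ}

theorem pd_div_of_pow_mul_eq_one (hu : DifferentiableAt ℂ u z)
    (huJ : ∀ᶠ w in 𝓝 z, u w ^ (m + 1) * J w = 1) (i : Fin n) :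
    pd n i J z / J z = -((m : ℂ) + 1) * (pd n i u z / u z) := by
  have hz : u z ≠ 0 :=
    ne_zero_pow m.succ_ne_zero (left_ne_zero_of_mul_eq_one huJ.self_of_nhds)
  have hJ : J =ᶠ[𝓝 z] fun w => (u w ^ (m + 1))⁻¹ :=
    huJ.mono fun w hw => eq_inv_of_mul_eq_one_right hw
  have hderiv : HasFDerivAt (fun w => (u w ^ (m + 1))⁻¹) _ z :=
    ((hasDerivAt_pow (m + 1) (u z)).inv (pow_ne_zero _ hz)).comp_hasFDerivAt z hu.hasFDerivAt
  rw [pd, hJ.fderiv_eq, hderiv.fderiv, hJ.self_of_nhds]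
  simp only [pd, smul_apply, smul_eq_mul, Nat.cast_add_one, Nat.add_sub_cancel]
  field_simp
  ring

theorem pd_pd_div_of_pow_mul_eq_one (hu : ContDiffAt ℂ 2 u z)
    (huJ : ∀ᶠ w in 𝓝 z, u w ^ (m + 1) * J w = 1) (i j : Fin n) :
    pd n j (fun w => pd n i J w / J w) z =
      -((m : ℂ) + 1) * (pd2 n i j u z / u z - pd n i u z / u z * (pd n j u z / u z)) := by
  have hz : u z ≠ 0 :=
    ne_zero_pow m.succ_ne_zero (left_ne_zero_of_mul_eq_one huJ.self_of_nhds)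
  have hlog : (fun w => pd n i J w / J w) =ᶠ[𝓝 z]
      fun w => -((m : ℂ) + 1) * (pd n i u w / u w) := by
    filter_upwards [huJ.eventually_nhds, hu.eventually (by simp)] with w hw huw
    exact pd_div_of_pow_mul_eq_one (huw.differentiableAt two_ne_zero) hw i
  have hquot := hasFDerivAt_fun_div (differentiableAt_pd hu i).hasFDerivAt
    (hu.differentiableAt two_ne_zero).hasFDerivAt hz
  rw [← pd_pd_div hu hz, pd, hlog.fderiv_eq, fderiv_const_mul hquot.differentiableAt, smul_apply,
    smul_eq_mul, pd]

theorem eventually_euclNorm_lt (n : ℕ) {r : ℝ} (hr : 0 < r) :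
    ∀ᶠ z in 𝓝 (0 : Fin n → ℂ), euclNorm n z < r := by
  have hcont : Continuous (euclNorm n) := by
    unfold euclNorm
    fun_prop
  exact hcont.continuousAt.eventually_lt continuousAt_const (by simpa [euclNorm] using hr)

theorem stmt_8_general (n : ℕ) (F : (Fin n → ℂ) → (Fin n → ℂ)) (u₀ : (Fin n → ℂ) → ℂ)
    (z : Fin n → ℂ) (hu₀hol : ∀ᶠ w in 𝓝 z, DifferentiableAt ℂ u₀ w)
    (hu₀pow : ∀ᶠ w in 𝓝 z, u₀ w ^ (n + 1) * JDet n F w = 1)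
    (Λ : Fin n → ℂ) (hΛ : ∀ k, pd n k (JDet n F) z / JDet n F z = Λ k) (i j : Fin n) :
    pd n j (fun w => pd n i (JDet n F) w / JDet n F w) z =
      (∑ k, oSchw n F i j k z * Λ k) - ((n : ℂ) + 1) * oS0 n F u₀ i j z
        + Λ i * Λ j / ((n : ℂ) + 1) := by
  have hΛu : ∀ k, Λ k = -((n : ℂ) + 1) * (pd n k u₀ z / u₀ z) := fun k => by
    rw [← hΛ, pd_div_of_pow_mul_eq_one hu₀hol.self_of_nhds hu₀pow]
  have hsum : ∑ k, oSchw n F i j k z * Λ k =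
      -((n : ℂ) + 1) * ((u₀ z)⁻¹ * ∑ k, oSchw n F i j k z * pd n k u₀ z) := by
    simp only [hΛu, Finset.mul_sum]
    exact Finset.sum_congr rfl fun k _ => by ring
  have hn : (n : ℂ) + 1 ≠ 0 := n.cast_add_one_ne_zero
  have hu₀ : ContDiffAt ℂ 2 u₀ z := contDiffAt_nat_of_eventually_differentiableAt hu₀hol 2
  rw [pd_pd_div_of_pow_mul_eq_one hu₀ hu₀pow, hsum, hΛu i, hΛu j, oS0]
  field_simp
  ring

end PartialDerivatives

/-- Lemma 3.1: for normalized locally biholomorphic `F₀` with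
`Λ = ∇(JF₀)(0)`, `B_{ij} = Σ_k S^k_{ij}F₀(0)λ_k`, `B⁰_{ij} = S⁰_{ij}F₀(0)` and
`A_{ij} = B_{ij} − (n+1)B⁰_{ij} + λ_iλ_j/(n+1)`, the map `φ(ζ) = ∇(JF₀)(ζ)/JF₀(ζ)`
satisfies `φ(0) = Λ` and `Dφ(0) = A`, i.e. `∂²(log JF₀)/∂z_j∂z_i(0) = A_{ij}`. -/
theorem stmt_8 (n : ℕ) (hn : 2 ≤ n) (F₀ : (Fin n → ℂ) → (Fin n → ℂ))
    (hF₀hol : DifferentiableOn ℂ F₀ (eball n))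
    (hF₀J : ∀ z ∈ eball n, JDet n F₀ z ≠ 0)
    (hF₀0 : F₀ 0 = 0) (hF₀D : Jac n F₀ 0 = 1)
    -- `u₀` is a local branch of `(JF₀)^{-1/(n+1)}` with `u₀(0) = 1`
    (u₀ : (Fin n → ℂ) → ℂ) (r : ℝ) (hr : 0 < r) (hr1 : r ≤ 1)
    (hu₀hol : DifferentiableOn ℂ u₀ {z | euclNorm n z < r}) (hu₀0 : u₀ 0 = 1)
    (hu₀pow : ∀ z, euclNorm n z < r → u₀ z ^ (n + 1) * JDet n F₀ z = 1)
    (Λ : Fin n → ℂ) (hΛ : ∀ k, Λ k = pd n k (JDet n F₀) 0)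
    (A : Fin n → Fin n → ℂ)
    (hA : ∀ i j, A i j = (∑ k, oSchw n F₀ i j k 0 * Λ k)
      - ((n : ℂ) + 1) * oS0 n F₀ u₀ i j 0 + Λ i * Λ j / ((n : ℂ) + 1)) :
    (∀ i, pd n i (JDet n F₀) 0 / JDet n F₀ 0 = Λ i) ∧
    (∀ i j, pd n j (fun w => pd n i (JDet n F₀) w / JDet n F₀ w) 0 = A i j) := by
  have hlog : ∀ i, pd n i (JDet n F₀) 0 / JDet n F₀ 0 = Λ i := fun i => by
    rw [hΛ, JDet, hF₀D, Matrix.det_one, div_one]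
  have hball := eventually_euclNorm_lt n hr
  have hu₀diff := hball.eventually_nhds.mono fun _ => hu₀hol.differentiableAt
  exact ⟨hlog, fun i j =>
    (stmt_8_general n F₀ u₀ 0 hu₀diff (hball.mono hu₀pow) Λ hlog i j).trans (hA i j).symm⟩

end
end
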